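/- Given 0 < δ ≤ ρ_i, \barρ_i ≤ M for all i and 0 < δ ≤ θ, \barθ ≤ M, there exist constants c₁, c₂ > 0 depending only on δ, M, n, and the constants R_i, c_i, such that for the multicomponent ideal gas: c₁|ω − \barω|² ≤ J(ω|\barω) and |p(ω|\barω)| + |(−ρη)(ω|\barω)| ≤ c₂ J(ω|\barω), where J, p(·|·), (−ρη)(·|·) are the relative quantities for the ideal-gas free energy ρψ = Σ_i R_i θ ρ_i log ρ_i − Σ_i c_i ρ_i θ log θ. -/

import Mathlib

/-- Relative entropy of `x log x`. -/
noncomputable def hrel (a b : ℝ) : ℝ := a * (Real.log a - Real.log b) - (a - b)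

lemma hrel_lower {M a b : ℝ} (ha : 0 < a) (hb : 0 < b) (haM : a ≤ M) (hbM : b ≤ M) :
    (a - b) ^ 2 / (4 * M) ≤ hrel a b := by
  have hM : 0 < M := by linarith
  obtain ⟨x, hx, rfl⟩ : ∃ x : ℝ, 0 < x ∧ x ^ 2 = a :=
    ⟨√a, Real.sqrt_pos.2 ha, Real.sq_sqrt ha.le⟩
  obtain ⟨y, hy, rfl⟩ : ∃ x : ℝ, 0 < x ∧ x ^ 2 = b :=
    ⟨√b, Real.sqrt_pos.2 hb, Real.sq_sqrt hb.le⟩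
  have h1 : Real.log (y / x) ≤ y / x - 1 := Real.log_le_sub_one_of_pos (by positivity)
  rw [Real.log_div hy.ne' hx.ne'] at h1
  have h2 : (x - y) ^ 2 ≤ hrel (x ^ 2) (y ^ 2) := by
    unfold hrel
    rw [Real.log_pow, Real.log_pow]
    push_cast
    have h3 := mul_le_mul_of_nonneg_left h1 (sq_nonneg x)
    have h4 : x ^ 2 * (y / x - 1) = x * y - x ^ 2 := by field_simp
    nlinarith
  refine le_trans ?_ h2
  rw [div_le_iff₀ (by positivity)]
  have h5 : (x + y) ^ 2 ≤ 4 * M := by nlinarith [sq_nonneg (x - y)]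
  have h6 := mul_le_mul_of_nonneg_left h5 (sq_nonneg (x - y))
  nlinarith

lemma term_bound (R c δ M : ℝ) (hR : 0 < R) (hc : 0 < c) (hδ : 0 < δ) (hδM : δ ≤ M) :
    ∃ k > (0 : ℝ), ∃ C > (0 : ℝ), ∀ a b t s : ℝ, a ∈ Set.Icc δ M → b ∈ Set.Icc δ M →
      t ∈ Set.Icc δ M → s ∈ Set.Icc δ M →
      k * ((a - b) ^ 2 + (t - s) ^ 2) ≤ R * s * hrel a b + c * a * hrel s t ∧
      |R * ((a - b) * (t - s))| +
        |(R * s * hrel a b + c * a * hrel s t) / s - c * ((a - b) * (t - s)) / s| ≤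
        C * (R * s * hrel a b + c * a * hrel s t) := by
  have hM : 0 < M := by linarith
  obtain ⟨m, hm, hmR, hmc⟩ : ∃ m > (0 : ℝ), m ≤ R ∧ m ≤ c :=
    ⟨min R c, lt_min hR hc, min_le_left _ _, min_le_right _ _⟩
  obtain ⟨k, hk⟩ : ∃ k, k = m * δ / (4 * M) := ⟨_, rfl⟩
  have hk0 : 0 < k := by rw [hk]; positivity
  refine ⟨k, hk0, 1 / δ + (R + c / δ) / (2 * k), by positivity, ?_⟩
  rintro a b t s ⟨ha, ha'⟩ ⟨hb, hb'⟩ ⟨ht, ht'⟩ ⟨hs, hs'⟩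
  have h1 := hrel_lower (M := M) (a := a) (b := b) (by linarith) (by linarith) ha' hb'
  have h2 := hrel_lower (M := M) (a := s) (b := t) (by linarith) (by linarith) hs' ht'
  have e1 : m * δ ≤ R * s := by gcongr
  have e2 : m * δ ≤ c * a := by gcongr
  have f1 : m * δ * ((a - b) ^ 2 / (4 * M)) ≤ R * s * hrel a b :=
    mul_le_mul e1 h1 (by positivity) ((by positivity : (0:ℝ) ≤ m * δ).trans e1)
  have f2 : m * δ * ((s - t) ^ 2 / (4 * M)) ≤ c * a * hrel s t :=
    mul_le_mul e2 h2 (by positivity) ((by positivity : (0:ℝ) ≤ m * δ).trans e2)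
  have key : k * ((a - b) ^ 2 + (t - s) ^ 2) ≤ R * s * hrel a b + c * a * hrel s t := by
    calc _ = m * δ * ((a - b) ^ 2 / (4 * M)) + m * δ * ((s - t) ^ 2 / (4 * M)) := by
          rw [hk]; ring
      _ ≤ _ := add_le_add f1 f2
  refine ⟨key, ?_⟩
  generalize R * s * hrel a b + c * a * hrel s t = J at key ⊢
  have hJ : 0 ≤ J := le_trans (by positivity) key
  have hs0 : 0 < s := by linarith
  have hX : |(a - b) * (t - s)| ≤ J / (2 * k) := by
    rw [le_div_iff₀ (by positivity), abs_mul]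
    have := two_mul_le_add_sq |a - b| |t - s|
    rw [sq_abs, sq_abs] at this
    nlinarith [mul_le_mul_of_nonneg_left this hk0.le]
  have g1 : |R * ((a - b) * (t - s))| ≤ R * (J / (2 * k)) := by
    rw [abs_mul, abs_of_pos hR]; gcongr
  have g2 : |c * ((a - b) * (t - s)) / s| ≤ c * (J / (2 * k)) / δ := by
    rw [abs_div, abs_mul, abs_of_pos hc, abs_of_pos hs0]; gcongr
  have g3 : |J / s| ≤ J / δ := by
    rw [abs_of_nonneg (by positivity)]; gcongr
  calc _ ≤ R * (J / (2 * k)) + (|J / s| + |c * ((a - b) * (t - s)) / s|) :=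
        add_le_add g1 (abs_sub _ _)
    _ ≤ R * (J / (2 * k)) + (J / δ + c * (J / (2 * k)) / δ) := by gcongr
    _ = _ := by field_simp; ring


/-- For states in the box `[δ, M]^{n+1}` with `0 < δ ≤ M`, there are constants
`c₁, c₂ > 0` (depending only on `δ, M, n, R_i, c_i`) such that for the multicomponent ideal gas,
`c₁|ω - ω̄|² ≤ J(ω|ω̄)` and `|p(ω|ω̄)| + |(-ρη)(ω|ω̄)| ≤ c₂ J(ω|ω̄)`, where `J`, `p(·|·)` and
`(-ρη)(·|·)` are the relative quantities (second-order Taylor remainders) for the ideal-gas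
free energy `ρψ = Σ R_i θ ρ_i log ρ_i - Σ c_i ρ_i θ log θ`. -/
theorem stmt17 (n : ℕ) (hn : 0 < n) (R cc : Fin n → ℝ)
    (hR : ∀ i, 0 < R i) (hcc : ∀ i, 0 < cc i)
    (δ M : ℝ) (hδ : 0 < δ) (hδM : δ ≤ M) :
    ∃ c₁ > (0 : ℝ), ∃ c₂ > (0 : ℝ),
      ∀ (ρ ρ' : Fin n → ℝ) (θ θ' : ℝ),
        (∀ i, ρ i ∈ Set.Icc δ M) → (∀ i, ρ' i ∈ Set.Icc δ M) →
        θ ∈ Set.Icc δ M → θ' ∈ Set.Icc δ M →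
        ∀ J P N : ℝ,
        J = (∑ i, cc i * ρ i * θ) - (∑ i, cc i * ρ' i * θ')
          - (∑ i, (R i * (1 + Real.log (ρ' i)) * θ' - cc i * θ' * Real.log θ') * (ρ i - ρ' i))
          - θ' * (((-∑ i, R i * ρ i * Real.log (ρ i)) + ∑ i, cc i * ρ i * (1 + Real.log θ))
              - ((-∑ i, R i * ρ' i * Real.log (ρ' i)) + ∑ i, cc i * ρ' i * (1 + Real.log θ'))) →
        P = (∑ j, R j * ρ j * θ) - (∑ j, R j * ρ' j * θ')
          - (∑ j, (R j * θ') * (ρ j - ρ' j)) - (∑ j, R j * ρ' j) * (θ - θ') →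
        N = (-((-∑ i, R i * ρ i * Real.log (ρ i)) + ∑ i, cc i * ρ i * (1 + Real.log θ)))
          + ((-∑ i, R i * ρ' i * Real.log (ρ' i)) + ∑ i, cc i * ρ' i * (1 + Real.log θ'))
          + (∑ j, (-(R j * (1 + Real.log (ρ' j))) + cc j * (1 + Real.log θ')) * (ρ j - ρ' j))
          + ((∑ i, cc i * ρ' i) / θ') * (θ - θ') →
        c₁ * ((∑ i, (ρ i - ρ' i) ^ 2) + (θ - θ') ^ 2) ≤ J ∧ |P| + |N| ≤ c₂ * J := by
  choose k hk C hC hb using fun i => term_bound (R i) (cc i) δ M (hR i) (hcc i) hδ hδM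
  have hne : (Finset.univ : Finset (Fin n)).Nonempty := ⟨⟨0, hn⟩, Finset.mem_univ _⟩
  have hc1 : 0 < Finset.univ.inf' hne k := (Finset.lt_inf'_iff hne).2 fun i _ => hk i
  have hc1k : ∀ i, Finset.univ.inf' hne k ≤ k i := fun i => Finset.inf'_le _ (Finset.mem_univ i)
  generalize Finset.univ.inf' hne k = c1 at hc1 hc1k
  refine ⟨c1, hc1, ∑ i, C i, Finset.sum_pos (fun i _ => hC i) hne, ?_⟩
  intro ρ ρ' θ θ' hρ hρ' hθ hθ' J P N hJ hP hN
  have hs0 : θ' ≠ 0 := (hδ.trans_le hθ'.1).ne'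
  have hJ' : J = ∑ i, (R i * θ' * hrel (ρ i) (ρ' i) + cc i * ρ i * hrel θ' θ) := by
    rw [hJ]
    simp only [← Finset.sum_neg_distrib, ← Finset.sum_add_distrib, ← Finset.sum_sub_distrib,
      Finset.mul_sum]
    refine Finset.sum_congr rfl fun i _ => ?_
    unfold hrel; ring
  have hP' : P = ∑ i, R i * ((ρ i - ρ' i) * (θ - θ')) := by
    rw [hP]
    simp only [← Finset.sum_neg_distrib, ← Finset.sum_add_distrib, ← Finset.sum_sub_distrib,
      Finset.sum_mul]
    refine Finset.sum_congr rfl fun i _ => ?_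
    ring
  have hN' : N = ∑ i, ((R i * θ' * hrel (ρ i) (ρ' i) + cc i * ρ i * hrel θ' θ) / θ'
      - cc i * ((ρ i - ρ' i) * (θ - θ')) / θ') := by
    rw [hN]
    simp only [← Finset.sum_neg_distrib, ← Finset.sum_add_distrib, ← Finset.sum_sub_distrib,
      Finset.sum_mul, Finset.sum_div]
    refine Finset.sum_congr rfl fun i _ => ?_
    unfold hrel; field_simp; ring
  have hb' := fun i => hb i (ρ i) (ρ' i) θ θ' (hρ i) (hρ' i) hθ hθ'
  constructor
  · have hn1 : (1:ℝ) ≤ n := by exact_mod_cast hn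
    calc c1 * ((∑ i, (ρ i - ρ' i) ^ 2) + (θ - θ') ^ 2)
        ≤ c1 * ((∑ i, (ρ i - ρ' i) ^ 2) + n * (θ - θ') ^ 2) := by
          gcongr
          nlinarith [sq_nonneg (θ - θ')]
      _ = ∑ i, c1 * ((ρ i - ρ' i) ^ 2 + (θ - θ') ^ 2) := by
          rw [← Finset.mul_sum, Finset.sum_add_distrib]; simp
      _ ≤ J := by
          rw [hJ']
          refine Finset.sum_le_sum fun i _ => le_trans ?_ (hb' i).1
          exact mul_le_mul_of_nonneg_right (hc1k i) (by positivity)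
  · rw [hP', hN']
    refine (add_le_add (Finset.abs_sum_le_sum_abs _ _) (Finset.abs_sum_le_sum_abs _ _)).trans ?_
    rw [← Finset.sum_add_distrib, hJ', Finset.mul_sum]
    refine Finset.sum_le_sum fun i _ => (hb' i).2.trans ?_
    refine mul_le_mul_of_nonneg_right
      (Finset.single_le_sum (fun j _ => (hC j).le) (Finset.mem_univ i)) ?_
    exact le_trans (mul_nonneg (hk i).le (by positivity)) (hb' i).1
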